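/- (Green's theorem) Let L be the union of five lines in general position in the complex projective plane P²(ℂ), where general position means that no three of the lines pass through a common point. Then the complement P²(ℂ) \ L is hyperbolic: every holomorphic map f : ℂ → P²(ℂ) whose image avoids L is constant. -/

import Mathlib

/- Green's theorem: the complement of five lines in general position in `P²(ℂ)` is
hyperbolic.

The complex projective plane is `Projectivization ℂ (Fin 3 → ℂ)`.  A map
`f : ℂ → P²(ℂ)` is holomorphic iff around every point it admits a nonvanishing
holomorphic lift to `ℂ³ \ {0}`; this is the predicate `HoloToProj`.  A line is the zero
locus of a nonzero linear form `L i`; the point `x` lies on it iff `L i x.rep = 0`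
(a scale-invariant condition).  General position means no point lies on three of
the lines (no triple point). -/

open Metric Filter
open scoped Manifold Topology

noncomputable section

/-- A map from `ℂ` to a projective space is holomorphic if it locally admits nonvanishing
holomorphic lifts. -/
def HoloToProj {m : ℕ} (f : ℂ → Projectivization ℂ (Fin m → ℂ)) : Prop :=
  ∀ z₀ : ℂ, ∃ W : Set ℂ, IsOpen W ∧ z₀ ∈ W ∧ ∃ F : ℂ → (Fin m → ℂ),
    DifferentiableOn ℂ F W ∧ ∀ z ∈ W, ∃ h : F z ≠ 0, f z = Projectivization.mk ℂ (F z) h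

/-- Entire nonvanishing functions have entire logarithms. -/
lemma exists_entire_log {u : ℂ → ℂ} (hu : Differentiable ℂ u) (h0 : ∀ z, u z ≠ 0) :
    ∃ p : ℂ → ℂ, Differentiable ℂ p ∧ ∀ z, u z = Complex.exp (p z) := by
  have hd : Differentiable ℂ (fun z => deriv u z / u z) :=
    (hu.deriv).div hu h0
  obtain ⟨p, hp0, hp⟩ := hd.isExactOn_univ.with_val_at 0 (Complex.log (u 0))
  have hp' : ∀ z, HasDerivAt p (deriv u z / u z) z := fun z => hp z (Set.mem_univ z)
  refine ⟨p, fun z => (hp' z).differentiableAt, fun z => ?_⟩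
  have hder : ∀ z, HasDerivAt (fun z => u z * Complex.exp (-p z)) 0 z := by
    intro z
    have := (hu z).hasDerivAt.mul ((hp' z).neg.cexp)
    refine this.congr_deriv ?_
    have := h0 z
    field_simp
    ring
  have hc := is_const_of_deriv_eq_zero (f := fun z => u z * Complex.exp (-p z))
    (fun z => (hder z).differentiableAt) (fun z => (hder z).deriv) z 0
  simp only [hp0, Complex.exp_neg, Complex.exp_log (h0 0)] at hc
  rw [mul_inv_cancel₀ (h0 0)] at hc
  have := Complex.exp_ne_zero (p z)
  field_simp at hc
  exact hc

/-- Borel growth lemma. -/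
lemma borel_growth {T : ℝ → ℝ} (hT : Continuous T) (h1 : ∀ r, 1 ≤ T r) (r0 : ℝ) :
    ∃ r, r0 ≤ r ∧ T (r + 1 / T r) ≤ 2 * T r := by
  by_contra! hcon
  let a : ℕ → ℝ := fun n => Nat.rec r0 (fun _ x => x + 1 / T x) n
  have ha0 : a 0 = r0 := rfl
  have has : ∀ n, a (n+1) = a n + 1 / T (a n) := fun n => rfl
  have hle : ∀ n, r0 ≤ a n := by
    intro n
    induction n with
    | zero => exact le_rfl
    | succ n ih =>
      rw [has]
      have : 0 < 1 / T (a n) := by have := h1 (a n); positivity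
      linarith
  have hpow : ∀ n, (2:ℝ)^n ≤ T (a n) := by
    intro n
    induction n with
    | zero => simpa using h1 _
    | succ n ih =>
      rw [has, pow_succ]
      have := hcon (a n) (hle n)
      linarith
  have hup : ∀ n, a n ≤ r0 + 2 - 2 * (1/2)^n := by
    intro n
    induction n with
    | zero => simp [ha0]
    | succ n ih =>
      rw [has, pow_succ]
      have : 1 / T (a n) ≤ (1/2)^n := by
        rw [one_div_pow]
        exact one_div_le_one_div_of_le (by positivity) (hpow n)
      linarith
  obtain ⟨B, hB⟩ := (isCompact_Icc (a := r0) (b := r0 + 2)).bddAbove_image hT.continuousOn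
  obtain ⟨n, hn⟩ := pow_unbounded_of_one_lt B (one_lt_two)
  have h2 : a n ≤ r0 + 2 := by
    have := hup n
    have h3 : (0:ℝ) ≤ (1/2)^n := by positivity
    linarith
  have := hB ⟨a n, ⟨hle n, h2⟩, rfl⟩
  linarith [hpow n]

open Complex in
/-- Pointwise bound on the real part by the Poisson formula. -/
lemma re_le_poisson {p : ℂ → ℂ} (hp : Differentiable ℂ p) {φ : ℂ → ℝ} (hφ : Continuous φ)
    (hφ0 : ∀ z, 0 ≤ φ z) (hφp : ∀ z, (p z).re ≤ φ z) {R : ℝ} {w : ℂ} (hw : ‖w‖ < R) :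
    (p w).re ≤ (R + ‖w‖) / (R - ‖w‖) * Real.circleAverage φ 0 R := by
  have hR : 0 < R := (norm_nonneg w).trans_lt hw
  have hwb : w ∈ ball (0:ℂ) R := by simpa using hw
  have hh : InnerProductSpace.HarmonicOnNhd (fun z => (p z).re) (closedBall 0 R) :=
    fun z _ => (hp.analyticAt z).harmonicAt_re
  have key := hh.circleAverage_re_herglotzRieszKernel_smul hwb
  have hk : ContinuousOn (re ∘ herglotzRieszKernel 0 w) (sphere 0 |R|) :=
    continuous_re.comp_continuousOn (continuousOn_herglotzRieszKernel_sphere hwb)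
  have hi1 : CircleIntegrable ((re ∘ herglotzRieszKernel 0 w) • (fun z => (p z).re)) 0 R := by
    apply ContinuousOn.circleIntegrable'
    exact hk.smul (continuous_re.comp hp.continuous).continuousOn
  have hi2 : CircleIntegrable (fun z => ((R + ‖w‖) / (R - ‖w‖)) • φ z) 0 R := by
    apply ContinuousOn.circleIntegrable'
    exact (continuous_const.mul hφ).continuousOn
  rw [← smul_eq_mul, ← Real.circleAverage_fun_smul, ← key]
  apply Real.circleAverage_mono hi1 hi2
  intro z hz
  rw [abs_of_pos hR] at hz
  have e1 := re_herglotzRieszKernel_le hz hwb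
  have e2 := le_re_herglotzRieszKernel hz hwb
  have e3 : (re ∘ herglotzRieszKernel 0 w) z = ((z - 0 + (w - 0)) / ((z - 0) - (w - 0))).re := by
    simp [herglotzRieszKernel_def]
  simp only [sub_zero] at e1 e2 e3
  simp only [Pi.smul_apply', smul_eq_mul]
  rw [e3]
  have e4 : 0 ≤ ((z + w) / (z - w)).re :=
    le_trans (div_nonneg (by linarith) (by positivity)) e2
  exact (mul_le_mul_of_nonneg_left (hφp z) e4).trans (mul_le_mul_of_nonneg_right e1 (hφ0 z))

/-- Derivative bounds for `p` in terms of the average. -/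
lemma deriv_bounds {p : ℂ → ℂ} (hp : Differentiable ℂ p) {φ : ℂ → ℝ} (hφ : Continuous φ)
    (hφ0 : ∀ z, 0 ≤ φ z) (hφp : ∀ z, (p z).re ≤ φ z) {r R δ A : ℝ} (hr : 0 ≤ r) (hδ : 0 < δ)
    (hR : R = r + 4 * δ) (hA : Real.circleAverage φ 0 R ≤ A) (hA0 : 0 < A) {z : ℂ} (hz : ‖z‖ ≤ r) :
    ‖deriv p z‖ ≤ 2 * R * (2 * R * A / δ + ‖p 0‖) / δ / δ ∧
    ‖deriv (deriv p) z‖ ≤ 2 * R * (2 * R * A / δ + ‖p 0‖) / δ / δ / δ := by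
  set M := 2 * R * A / δ with hM
  have hRpos : 0 < R := by linarith
  have hMpos : 0 < M := by positivity
  have hre : ∀ w : ℂ, ‖w‖ < R - δ → (p w).re ≤ M := by
    intro w hw
    refine (re_le_poisson hp hφ hφ0 hφp (R := R) (by linarith)).trans ?_
    have h1 : (R + ‖w‖) / (R - ‖w‖) ≤ 2 * R / δ := by
      apply div_le_div₀ <;> linarith
    have h0 : 0 ≤ (R + ‖w‖) / (R - ‖w‖) := div_nonneg (by positivity) (by linarith)
    calc _ ≤ (R + ‖w‖) / (R - ‖w‖) * A := by gcongr
      _ ≤ 2 * R / δ * A := by gcongr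
      _ = M := by rw [hM]; ring
  set K := 2 * R * (M + ‖p 0‖) / δ with hK
  have hKb : ∀ w : ℂ, ‖w‖ ≤ r + 2 * δ → ‖p w‖ ≤ K := by
    intro w hw
    have h := Complex.borelCaratheodory (R := R - δ) (M := M) (f := p) (z := w) hMpos
      hp.differentiableOn (fun x hx => hre x (by simpa using hx)) (by linarith)
      (by simp; linarith)
    refine h.trans ?_
    rw [← add_div]
    have := norm_nonneg (p 0)
    have := norm_nonneg w
    apply div_le_div₀ (by positivity) _ hδ (by linarith)
    have e1 : 2 * M * ‖w‖ ≤ 2 * M * R := by gcongr; linarith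
    have e2 : ‖p 0‖ * (R - δ + ‖w‖) ≤ ‖p 0‖ * (2 * R) := by gcongr; linarith
    linarith
  have hK1 : ∀ w : ℂ, ‖w‖ ≤ r + δ → ‖deriv p w‖ ≤ K / δ := by
    intro w hw
    apply Complex.norm_deriv_le_of_forall_mem_sphere_norm_le hδ hp.diffContOnCl
    intro x hx
    apply hKb
    have : ‖x - w‖ = δ := by simpa [dist_eq_norm] using hx
    have := norm_le_norm_add_norm_sub' x w
    linarith
  refine ⟨hK1 z (by linarith), ?_⟩
  apply Complex.norm_deriv_le_of_forall_mem_sphere_norm_le hδ (hp.deriv).diffContOnCl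
  intro x hx
  apply hK1
  have : ‖x - z‖ = δ := by simpa [dist_eq_norm] using hx
  have := norm_le_norm_add_norm_sub' x z
  linarith

/-- Jensen's inequality. -/
lemma jensen_le {W : ℂ → ℂ} (hW : Differentiable ℂ W) (h0 : W 0 ≠ 0) {r : ℝ} (hr : 0 < r) :
    Real.log ‖W 0‖ ≤ Real.circleAverage (fun z => Real.log ‖W z‖) 0 r := by
  have han : AnalyticOnNhd ℂ W (closedBall 0 |r|) := fun z _ => hW.analyticAt z
  rw [han.circleAverage_log_norm hr.ne' h0]
  have : 0 ≤ ∑ᶠ u, (MeromorphicOn.divisor W (closedBall 0 |r|) u : ℝ) *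
      Real.log (r * ‖0 - u‖⁻¹) := by
    apply finsum_nonneg
    intro u
    by_cases hu : u ∈ closedBall (0:ℂ) |r|
    · apply mul_nonneg
      · exact_mod_cast MeromorphicOn.AnalyticOnNhd.divisor_nonneg han u
      · rcases eq_or_ne u 0 with rfl | hu0
        · simp
        · apply Real.log_nonneg
          have h1 : ‖u‖ ≤ r := by simpa [abs_of_pos hr] using hu
          have h2 : 0 < ‖u‖ := norm_pos_iff.2 hu0
          rw [zero_sub, norm_neg, ← div_eq_mul_inv, le_div_iff₀ h2]
          linarith
    · rw [Function.locallyFinsuppWithin.apply_eq_zero_of_notMem _ hu]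
      simp
  linarith

/-- The characteristic integrand. -/
def phiMax (p q s : ℂ → ℂ) (z : ℂ) : ℝ := max (max 0 (p z).re) (max (q z).re (s z).re)

/-- The Wronskian of `exp p, exp q`-derivatives. -/
def wronsk (p q : ℂ → ℂ) (z : ℂ) : ℂ :=
  Complex.exp (p z) * Complex.exp (q z) *
    (deriv p z * (deriv (deriv q) z + deriv q z ^ 2) - deriv q z * (deriv (deriv p) z + deriv p z ^ 2))

lemma log_bound_aux {W D : ℂ} {a B : ℝ} (hW : W ≠ 0) (h : ‖W‖ = Real.exp a * ‖D‖) (hD : ‖D‖ ≤ B) :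
    Real.log ‖W‖ ≤ a + Real.log B := by
  have hDpos : 0 < ‖D‖ := by
    rcases (norm_nonneg D).lt_or_eq with h1 | h1
    · exact h1
    · rw [← h1, mul_zero] at h
      exact absurd (norm_eq_zero.1 h) hW
  rw [h, Real.log_mul (Real.exp_pos a).ne' hDpos.ne', Real.log_exp]
  have := Real.log_le_log hDpos hD
  linarith

lemma cross_bound {a b c d : ℂ} {N : ℝ} (hN : 1 ≤ N) (ha : ‖a‖ ≤ N) (hb : ‖b‖ ≤ N) (hc : ‖c‖ ≤ N)
    (hd : ‖d‖ ≤ N) : ‖a * (b + c ^ 2) - c * (d + a ^ 2)‖ ≤ 4 * N ^ 3 := by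
  have h1 : ‖a * (b + c ^ 2)‖ ≤ 2 * N ^ 3 := by
    rw [norm_mul]
    have : ‖b + c ^ 2‖ ≤ 2 * N ^ 2 := by
      refine (norm_add_le _ _).trans ?_
      rw [norm_pow]
      have : ‖c‖ ^ 2 ≤ N ^ 2 := by gcongr
      nlinarith
    calc _ ≤ N * (2 * N ^ 2) := by gcongr
      _ = _ := by ring
  have h2 : ‖c * (d + a ^ 2)‖ ≤ 2 * N ^ 3 := by
    rw [norm_mul]
    have : ‖d + a ^ 2‖ ≤ 2 * N ^ 2 := by
      refine (norm_add_le _ _).trans ?_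
      rw [norm_pow]
      have : ‖a‖ ^ 2 ≤ N ^ 2 := by gcongr
      nlinarith
    calc _ ≤ N * (2 * N ^ 2) := by gcongr
      _ = _ := by ring
  refine (norm_sub_le _ _).trans ?_
  linarith

lemma rel_derivs {p q s : ℂ → ℂ} (hp : Differentiable ℂ p) (hq : Differentiable ℂ q)
    (hs : Differentiable ℂ s)
    (hrel : ∀ z, 1 + Complex.exp (p z) + Complex.exp (q z) = Complex.exp (s z)) (z : ℂ) :
    (Complex.exp (p z) * deriv p z + Complex.exp (q z) * deriv q z = Complex.exp (s z) * deriv s z) ∧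
    (Complex.exp (p z) * (deriv (deriv p) z + deriv p z ^ 2) +
      Complex.exp (q z) * (deriv (deriv q) z + deriv q z ^ 2) =
      Complex.exp (s z) * (deriv (deriv s) z + deriv s z ^ 2)) := by
  have d1 : ∀ {p : ℂ → ℂ}, Differentiable ℂ p → ∀ z, HasDerivAt (fun z => Complex.exp (p z))
      (Complex.exp (p z) * deriv p z) z := fun hp z => (hp z).hasDerivAt.cexp
  have d2 : ∀ {p : ℂ → ℂ}, Differentiable ℂ p → ∀ z,
      HasDerivAt (fun z => Complex.exp (p z) * deriv p z)
      (Complex.exp (p z) * (deriv (deriv p) z + deriv p z ^ 2)) z := by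
    intro p hp z
    refine ((d1 hp z).mul ((hp.deriv) z).hasDerivAt).congr_deriv ?_
    ring
  have r1 : ∀ z, Complex.exp (p z) * deriv p z + Complex.exp (q z) * deriv q z
      = Complex.exp (s z) * deriv s z := by
    intro z
    have h := ((d1 hp z).const_add 1).add (d1 hq z)
    have e : (fun z => Complex.exp (s z)) = (fun z => 1 + Complex.exp (p z)) +
      (fun z => Complex.exp (q z)) := by
      funext z
      exact (hrel z).symm
    rw [← e] at h
    exact h.unique (d1 hs z)
  refine ⟨r1 z, ?_⟩
  have h := (d2 hp z).add (d2 hq z)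
  have e : (fun z => Complex.exp (s z) * deriv s z) = (fun z => Complex.exp (p z) * deriv p z) +
    (fun z => Complex.exp (q z) * deriv q z) := by
    funext z
    exact (r1 z).symm
  rw [← e] at h
  exact h.unique (d2 hs z)

/-- The pointwise form of Cartan's estimate. -/
lemma pointwise_bound {p q s : ℂ → ℂ} (hp : Differentiable ℂ p) (hq : Differentiable ℂ q)
    (hs : Differentiable ℂ s)
    (hrel : ∀ z, 1 + Complex.exp (p z) + Complex.exp (q z) = Complex.exp (s z)) {z : ℂ} {N : ℝ}
    (hN : 1 ≤ N) (hp1 : ‖deriv p z‖ ≤ N) (hp2 : ‖deriv (deriv p) z‖ ≤ N)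
    (hq1 : ‖deriv q z‖ ≤ N) (hq2 : ‖deriv (deriv q) z‖ ≤ N)
    (hs1 : ‖deriv s z‖ ≤ N) (hs2 : ‖deriv (deriv s) z‖ ≤ N) (hW : wronsk p q z ≠ 0) :
    phiMax p q s z + Real.log ‖wronsk p q z‖ ≤
      (p z + q z + s z).re + Real.log (12 * N ^ 3) := by
  obtain ⟨r1, r2⟩ := rel_derivs hp hq hs hrel z
  have r0 := hrel z
  have b1 := cross_bound hN hp1 hq2 hq1 hp2
  have b2 := cross_bound hN hs1 hq2 hq1 hs2
  have b3 := cross_bound hN hp1 hs2 hs1 hp2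
  have hN3 : 0 ≤ N ^ 3 := by positivity
  have nexp : ∀ w : ℂ, ‖Complex.exp w‖ = Real.exp w.re := Complex.norm_exp
  have e0 : wronsk p q z = Complex.exp (p z) * Complex.exp (q z) *
    (deriv p z * (deriv (deriv q) z + deriv q z ^ 2)
      - deriv q z * (deriv (deriv p) z + deriv p z ^ 2)) := rfl
  set D1 := deriv p z * (deriv (deriv q) z + deriv q z ^ 2)
      - deriv q z * (deriv (deriv p) z + deriv p z ^ 2) with hD1
  set D2 := deriv s z * (deriv (deriv q) z + deriv q z ^ 2)
      - deriv q z * (deriv (deriv s) z + deriv s z ^ 2) with hD2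
  set D3 := deriv p z * (deriv (deriv s) z + deriv s z ^ 2)
      - deriv s z * (deriv (deriv p) z + deriv p z ^ 2) with hD3
  have e2 : wronsk p q z = Complex.exp (s z) * Complex.exp (q z) * D2 := by
    rw [e0, hD1, hD2]
    linear_combination Complex.exp (q z) * (deriv (deriv q) z + deriv q z ^ 2) * r1
      - Complex.exp (q z) * deriv q z * r2
  have e3 : wronsk p q z = Complex.exp (p z) * Complex.exp (s z) * D3 := by
    rw [e0, hD1, hD3]
    linear_combination Complex.exp (p z) * deriv p z * r2
      - Complex.exp (p z) * (deriv (deriv p) z + deriv p z ^ 2) * r1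
  have e4 : wronsk p q z = Complex.exp (p z) * Complex.exp (q z) * Complex.exp (s z) *
      (D1 - D2 - D3) := by
    linear_combination wronsk p q z * r0 + Complex.exp (s z) * e0 - Complex.exp (p z) * e2
      - Complex.exp (q z) * e3
  have n1 : Real.log ‖wronsk p q z‖ ≤ ((p z).re + (q z).re) + Real.log (12 * N ^ 3) := by
    apply log_bound_aux (D := D1) hW _ (by linarith)
    rw [e0, norm_mul, norm_mul, nexp, nexp, Real.exp_add]
  have n2 : Real.log ‖wronsk p q z‖ ≤ ((s z).re + (q z).re) + Real.log (12 * N ^ 3) := by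
    apply log_bound_aux (D := D2) hW _ (by linarith)
    rw [e2, norm_mul, norm_mul, nexp, nexp, Real.exp_add]
  have n3 : Real.log ‖wronsk p q z‖ ≤ ((p z).re + (s z).re) + Real.log (12 * N ^ 3) := by
    apply log_bound_aux (D := D3) hW _ (by linarith)
    rw [e3, norm_mul, norm_mul, nexp, nexp, Real.exp_add]
  have n4 : Real.log ‖wronsk p q z‖ ≤ ((p z).re + (q z).re + (s z).re)
      + Real.log (12 * N ^ 3) := by
    apply log_bound_aux (D := D1 - D2 - D3) hW
    · rw [e4, norm_mul, norm_mul, norm_mul, nexp, nexp, nexp, Real.exp_add, Real.exp_add]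
    · have := norm_sub_le (D1 - D2) D3
      have := norm_sub_le D1 D2
      linarith
  simp only [Complex.add_re]
  rcases max_choice (max 0 (p z).re) (max (q z).re (s z).re) with h | h
  · rcases max_choice 0 (p z).re with h' | h' <;> rw [phiMax, h, h'] <;> linarith
  · rcases max_choice (q z).re (s z).re with h' | h' <;> rw [phiMax, h, h'] <;> linarith

lemma phiMax_cont {p q s : ℂ → ℂ} (hp : Differentiable ℂ p) (hq : Differentiable ℂ q)
    (hs : Differentiable ℂ s) : Continuous (phiMax p q s) := by
  have h1 := Complex.continuous_re.comp hp.continuous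
  have h2 := Complex.continuous_re.comp hq.continuous
  have h3 := Complex.continuous_re.comp hs.continuous
  exact (continuous_const.max h1).max (h2.max h3)

lemma wronsk_diff {p q : ℂ → ℂ} (hp : Differentiable ℂ p) (hq : Differentiable ℂ q) :
    Differentiable ℂ (wronsk p q) := by
  have h1 := hp.deriv
  have h2 := hq.deriv
  have h3 := h1.deriv
  have h4 := h2.deriv
  unfold wronsk
  fun_prop

/-- Integrated form of Cartan's estimate. -/
lemma average_bound {p q s : ℂ → ℂ} (hp : Differentiable ℂ p) (hq : Differentiable ℂ q)
    (hs : Differentiable ℂ s)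
    (hrel : ∀ z, 1 + Complex.exp (p z) + Complex.exp (q z) = Complex.exp (s z)) {N r : ℝ}
    (hr : 0 < r) (hW0 : wronsk p q 0 ≠ 0)
    (hN : 1 ≤ N) (hp1 : ∀ z, ‖z‖ ≤ r → ‖deriv p z‖ ≤ N ∧ ‖deriv (deriv p) z‖ ≤ N)
    (hq1 : ∀ z, ‖z‖ ≤ r → ‖deriv q z‖ ≤ N ∧ ‖deriv (deriv q) z‖ ≤ N)
    (hs1 : ∀ z, ‖z‖ ≤ r → ‖deriv s z‖ ≤ N ∧ ‖deriv (deriv s) z‖ ≤ N) :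
    Real.circleAverage (phiMax p q s) 0 r ≤
      (p 0 + q 0 + s 0).re - Real.log ‖wronsk p q 0‖ + Real.log (12 * N ^ 3) := by
  classical
  have hWd := wronsk_diff hp hq
  have hJ := jensen_le hWd hW0 hr
  have hφi : CircleIntegrable (phiMax p q s) 0 r :=
    (phiMax_cont hp hq hs).continuousOn.circleIntegrable'
  have hWi : CircleIntegrable (fun z => Real.log ‖wronsk p q z‖) 0 r :=
    MeromorphicOn.circleIntegrable_log_norm (fun z _ => (hWd.analyticAt z).meromorphicAt)
  have hsd : Differentiable ℂ (fun z => p z + q z + s z) := by fun_prop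
  have hri : CircleIntegrable (fun z => (p z + q z + s z).re + Real.log (12 * N ^ 3)) 0 r :=
    ((Complex.continuous_re.comp hsd.continuous).add
      continuous_const).continuousOn.circleIntegrable'
  have hri' : CircleIntegrable (fun z => (p z + q z + s z).re) 0 r :=
    (Complex.continuous_re.comp hsd.continuous).continuousOn.circleIntegrable'
  let g : ℂ → ℝ := fun z => if wronsk p q z = 0 then (p z + q z + s z).re + Real.log (12 * N ^ 3)
    else phiMax p q s z + Real.log ‖wronsk p q z‖
  have hcod : (fun z => phiMax p q s z + Real.log ‖wronsk p q z‖)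
      =ᶠ[codiscreteWithin (sphere 0 |r|)] g := by
    have han : AnalyticOnNhd ℂ (wronsk p q) Set.univ := fun z _ => hWd.analyticAt z
    have h1 := han.preimage_zero_mem_codiscreteWithin (x := 0) hW0 (Set.mem_univ _)
      isConnected_univ
    have h2 := codiscreteWithin_mono (Set.subset_univ (sphere (0:ℂ) |r|)) h1
    filter_upwards [h2] with z hz
    have : wronsk p q z ≠ 0 := by simpa using hz
    simp [g, this]
  have hgi : CircleIntegrable g 0 r := (hφi.add hWi).congr_codiscreteWithin hcod
  have hle : Real.circleAverage g 0 r ≤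
      Real.circleAverage (fun z => (p z + q z + s z).re + Real.log (12 * N ^ 3)) 0 r := by
    apply Real.circleAverage_mono hgi hri
    intro z hz
    have hz' : ‖z‖ ≤ r := by
      have : ‖z‖ = |r| := by simpa using hz
      rw [this, abs_of_pos hr]
    by_cases h : wronsk p q z = 0
    · simp [g, h]
    · simp only [g, h, if_false]
      exact pointwise_bound hp hq hs hrel hN (hp1 z hz').1 (hp1 z hz').2 (hq1 z hz').1
        (hq1 z hz').2 (hs1 z hz').1 (hs1 z hz').2 h
  rw [← Real.circleAverage_congr_codiscreteWithin hcod hr.ne',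
    Real.circleAverage_fun_add hφi hWi,
    Real.circleAverage_fun_add hri' (circleIntegrable_const _ _ _), Real.circleAverage_const] at hle
  have hm : Real.circleAverage (fun z => (p z + q z + s z).re) 0 r = (p 0 + q 0 + s 0).re :=
    InnerProductSpace.HarmonicOnNhd.circleAverage_eq
      (fun z _ => (hsd.analyticAt z).harmonicAt_re)
  linarith

/-- If the Wronskian is nonzero at the origin, we get a contradiction. -/
lemma wronsk_zero {p q s : ℂ → ℂ} (hp : Differentiable ℂ p) (hq : Differentiable ℂ q)
    (hs : Differentiable ℂ s)
    (hrel : ∀ z, 1 + Complex.exp (p z) + Complex.exp (q z) = Complex.exp (s z)) :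
    wronsk p q 0 = 0 := by
  by_contra hW0
  set φ := phiMax p q s with hφdef
  have hφ : Continuous φ := phiMax_cont hp hq hs
  have hφ0 : ∀ z, 0 ≤ φ z := fun z => le_max_of_le_left (le_max_left _ _)
  have hφp : ∀ z, (p z).re ≤ φ z := fun z => le_max_of_le_left (le_max_right _ _)
  have hφq : ∀ z, (q z).re ≤ φ z := fun z => le_max_of_le_right (le_max_left _ _)
  have hφs : ∀ z, (s z).re ≤ φ z := fun z => le_max_of_le_right (le_max_right _ _)
  set T : ℝ → ℝ := fun r => Real.circleAverage φ 0 r + 1 with hT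
  have hTc : Continuous T := (Real.Continuous.circleAverage hφ (c := 0)).add continuous_const
  have hT1 : ∀ r, 1 ≤ T r := by
    intro r
    have : 0 ≤ Real.circleAverage φ 0 r := Real.circleAverage_nonneg_of_nonneg (fun z _ => hφ0 z)
    simp only [hT]; linarith
  set c0 := ‖p 0‖ + ‖q 0‖ + ‖s 0‖ with hc0
  have hc0p : ‖p 0‖ ≤ c0 := by have := norm_nonneg (q 0); have := norm_nonneg (s 0); linarith
  have hc0q : ‖q 0‖ ≤ c0 := by have := norm_nonneg (p 0); have := norm_nonneg (s 0); linarith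
  have hc0s : ‖s 0‖ ≤ c0 := by have := norm_nonneg (p 0); have := norm_nonneg (q 0); linarith
  have hc00 : 0 ≤ c0 := by positivity
  set C0 : ℝ := 256 * (32 + c0) with hC0
  -- the second main theorem inequality on good radii
  have main : ∃ C : ℝ, ∀ r0 : ℝ, ∃ r, r0 ≤ r ∧ 1 ≤ r ∧ T r ≤ C + 12 * Real.log r := by
    set C1 := (p 0 + q 0 + s 0).re - Real.log ‖wronsk p q 0‖ + 1 + Real.log 12
      + 3 * Real.log C0 with hC1
    refine ⟨2 * (C1 + 15 * Real.log 30), fun r0 => ?_⟩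
    obtain ⟨r, hr, hTr⟩ := borel_growth hTc hT1 (max r0 1)
    have hr1 : 1 ≤ r := (le_max_right _ _).trans hr
    refine ⟨r, (le_max_left _ _).trans hr, hr1, ?_⟩
    set t := T r with ht
    have ht1 : 1 ≤ t := hT1 r
    have htpos : 0 < t := by linarith
    set δ := 1 / (4 * t) with hδ
    have hδpos : 0 < δ := by positivity
    set R := r + 1 / t with hR
    have hRδ : R = r + 4 * δ := by rw [hR, hδ]; field_simp
    have hA : Real.circleAverage φ 0 R ≤ 2 * t := by
      have : T R = Real.circleAverage φ 0 R + 1 := rfl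
      linarith
    have hR2 : R ≤ 2 * r := by
      have : 1 / t ≤ 1 := by rw [div_le_one htpos]; exact ht1
      linarith
    set N := C0 * r ^ 2 * t ^ 5 with hN
    have hrt : 1 ≤ r ^ 2 * t ^ 5 := one_le_mul_of_one_le_of_one_le (one_le_pow₀ hr1) (one_le_pow₀ ht1)
    have hN1 : 1 ≤ N := by
      rw [hN, mul_assoc]
      exact one_le_mul_of_one_le_of_one_le (by rw [hC0]; linarith) hrt
    have bound : ∀ {g : ℂ → ℂ}, Differentiable ℂ g → (∀ z, (g z).re ≤ φ z) → ‖g 0‖ ≤ c0 →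
        ∀ z, ‖z‖ ≤ r → ‖deriv g z‖ ≤ N ∧ ‖deriv (deriv g) z‖ ≤ N := by
      intro g hg hgφ hgc z hz
      obtain ⟨b1, b2⟩ := deriv_bounds hg hφ hφ0 hgφ (by linarith : (0:ℝ) ≤ r) hδpos hRδ hA
        (by positivity) hz
      have hRpos : 0 < R := by linarith
      have e1 : 2 * R * (2 * R * (2 * t) / δ + ‖g 0‖) ≤ 2 * (2 * r) * ((32 + c0) * (r * t ^ 2)) := by
        have hh : 2 * R * (2 * t) / δ ≤ 32 * (r * t ^ 2) := by
          rw [hδ, div_div_eq_mul_div, div_one]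
          nlinarith [mul_le_mul_of_nonneg_right hR2 (by positivity : 0 ≤ t ^ 2)]
        have hrt2 : 1 ≤ r * t ^ 2 := one_le_mul_of_one_le_of_one_le hr1 (one_le_pow₀ ht1)
        have hh2 : ‖g 0‖ ≤ c0 * (r * t ^ 2) := hgc.trans (le_mul_of_one_le_right hc00 hrt2)
        have : 2 * R * (2 * t) / δ + ‖g 0‖ ≤ (32 + c0) * (r * t ^ 2) := by linarith
        gcongr
      have e2 : 2 * R * (2 * R * (2 * t) / δ + ‖g 0‖) / δ / δ / δ ≤ N := by
        calc _ ≤ 2 * (2 * r) * ((32 + c0) * (r * t ^ 2)) / δ / δ / δ := by gcongr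
          _ = N := by rw [hN, hC0, hδ]; field_simp; ring
      have hδ1 : δ ≤ 1 := by rw [hδ, div_le_one (by positivity)]; linarith
      refine ⟨b1.trans (le_trans ?_ e2), b2.trans e2⟩
      rw [le_div_iff₀ hδpos]
      exact mul_le_of_le_one_right (by positivity) hδ1
    have hav := average_bound hp hq hs hrel (by linarith : 0 < r) hW0 hN1 (bound hp hφp hc0p)
      (bound hq hφq hc0q) (bound hs hφs hc0s)
    have hC0pos : 0 < C0 := by positivity
    have hlog : Real.log (12 * N ^ 3) = Real.log 12 + 3 * Real.log C0 + 6 * Real.log r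
        + 15 * Real.log t := by
      have hr' : r ≠ 0 := by linarith
      rw [hN, Real.log_mul (by norm_num) (by positivity), Real.log_pow,
        Real.log_mul (by positivity) (by positivity), Real.log_mul (by positivity) (by positivity),
        Real.log_pow, Real.log_pow]
      push_cast; ring
    have hlt : Real.log t ≤ t / 30 + Real.log 30 := by
      have h1 := Real.log_le_sub_one_of_pos (by positivity : 0 < t / 30)
      rw [Real.log_div htpos.ne' (by norm_num)] at h1
      linarith
    have htT : t = Real.circleAverage φ 0 r + 1 := rfl
    linarith
  obtain ⟨C, hC⟩ := main
  -- now p' and q' vanish identically at 0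
  have van : ∀ {g : ℂ → ℂ}, Differentiable ℂ g → (∀ z, (g z).re ≤ φ z) → deriv g 0 = 0 := by
    intro g hg hgφ
    have hle : ∀ r0 : ℝ, ∃ r, r0 ≤ r ∧ 1 ≤ r ∧
        ‖deriv g 0‖ ≤ 256 * C / r + 3072 * (Real.log r / r) + 32 * ‖g 0‖ / r := by
      intro r0
      obtain ⟨r, h1, h2, h3⟩ := hC r0
      refine ⟨r, h1, h2, ?_⟩
      have hrpos : 0 < r := by linarith
      have hA : Real.circleAverage φ 0 r ≤ C + 12 * Real.log r := by
        have : T r = Real.circleAverage φ 0 r + 1 := rfl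
        linarith
      have := (deriv_bounds hg hφ hφ0 hgφ (le_refl (0:ℝ)) (by positivity : 0 < r / 4)
        (by ring : r = 0 + 4 * (r / 4)) hA (by linarith [hT1 r]) (z := 0) (by simp)).1
      refine this.trans (le_of_eq ?_)
      field_simp
      ring
    have hlim : Tendsto (fun r : ℝ => 256 * C / r + 3072 * (Real.log r / r) + 32 * ‖g 0‖ / r)
        atTop (𝓝 0) := by
      have l1 : Tendsto (fun r : ℝ => 256 * C / r) atTop (𝓝 0) := tendsto_const_nhds.div_atTop tendsto_id
      have l2 : Tendsto (fun r : ℝ => 32 * ‖g 0‖ / r) atTop (𝓝 0) :=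
        tendsto_const_nhds.div_atTop tendsto_id
      have l3 : Tendsto (fun r : ℝ => Real.log r / r) atTop (𝓝 0) :=
        Real.isLittleO_log_id_atTop.tendsto_div_nhds_zero
      simpa using (l1.add (l3.const_mul 3072)).add l2
    have : ‖deriv g 0‖ ≤ 0 := by
      apply le_of_forall_pos_le_add
      intro ε hε
      obtain ⟨r0, hr0⟩ := (hlim.eventually (gt_mem_nhds hε)).exists_forall_of_atTop
      obtain ⟨r, h1, -, h3⟩ := hle r0
      linarith [hr0 r h1]
    exact norm_le_zero_iff.1 this
  apply hW0
  simp [wronsk, van hp hφp, van hq hφq]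

lemma wronsk_zero_all {p q s : ℂ → ℂ} (hp : Differentiable ℂ p) (hq : Differentiable ℂ q)
    (hs : Differentiable ℂ s)
    (hrel : ∀ z, 1 + Complex.exp (p z) + Complex.exp (q z) = Complex.exp (s z)) (a : ℂ) :
    wronsk p q a = 0 := by
  have d1 : ∀ f : ℂ → ℂ, deriv (fun z => f (z + a)) = fun z => deriv f (z + a) := by
    intro f
    funext z
    exact deriv_comp_add_const f a z
  have := wronsk_zero (p := fun z => p (z + a)) (q := fun z => q (z + a)) (s := fun z => s (z + a))
    (hp.comp (differentiable_id.add_const a)) (hq.comp (differentiable_id.add_const a))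
    (hs.comp (differentiable_id.add_const a)) (fun z => hrel (z + a))
  simpa [wronsk, d1] using this

/-- Vanishing Wronskian implies linear dependence. -/
lemma dependent_of_wronsk {g h : ℂ → ℂ} (hg : Differentiable ℂ g) (hh : Differentiable ℂ h)
    (hW : ∀ z, g z * deriv h z = h z * deriv g z) {z1 : ℂ} (hz1 : g z1 ≠ 0) :
    ∀ z, h z = h z1 / g z1 * g z := by
  have hne : ∀ᶠ z in 𝓝 z1, g z ≠ 0 := hg.continuous.continuousAt.eventually_ne hz1
  obtain ⟨ε, hε, hball⟩ := Metric.eventually_nhds_iff_ball.1 hne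
  have hloc : ∀ z ∈ ball z1 ε, h z / g z = h z1 / g z1 := by
    have hd : ∀ z ∈ ball z1 ε, HasDerivAt (fun z => h z / g z) 0 z := by
      intro z hz
      refine ((hh z).hasDerivAt.div (hg z).hasDerivAt (hball z hz)).congr_deriv ?_
      rw [div_eq_zero_iff]
      left
      linear_combination hW z
    intro z hz
    exact (convex_ball z1 ε).is_const_of_fderivWithin_eq_zero (𝕜 := ℂ) (f := fun z => h z / g z)
      (fun w hw => (hd w hw).differentiableAt.differentiableWithinAt)
      (fun w hw => by
        rw [fderivWithin_of_isOpen isOpen_ball hw]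
        ext
        simp [(hd w hw).deriv]) hz (mem_ball_self hε)
  have han1 : AnalyticOnNhd ℂ h Set.univ := fun z _ => hh.analyticAt z
  have han2 : AnalyticOnNhd ℂ (fun z => h z1 / g z1 * g z) Set.univ :=
    fun z _ => (hg.const_mul (h z1 / g z1)).analyticAt z
  have := han1.eq_of_eventuallyEq (z₀ := z1) han2 (by
    filter_upwards [ball_mem_nhds z1 hε] with z hz
    rw [← hloc z hz, div_mul_cancel₀ _ (hball z hz)])
  intro z
  exact congrFun this z

/-- Borel's theorem for four units. -/
theorem borel_four {u v : ℂ → ℂ} (hu : Differentiable ℂ u) (hv : Differentiable ℂ v)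
    (hu0 : ∀ z, u z ≠ 0) (hv0 : ∀ z, v z ≠ 0) (hw0 : ∀ z, 1 + u z + v z ≠ 0) :
    ∃ a b c : ℂ, (a ≠ 0 ∨ b ≠ 0 ∨ c ≠ 0) ∧ ∀ z, a + b * u z + c * v z = 0 := by
  obtain ⟨p, hp, hup⟩ := exists_entire_log hu hu0
  obtain ⟨q, hq, hvq⟩ := exists_entire_log hv hv0
  obtain ⟨s, hs, hws⟩ := exists_entire_log (u := fun z => 1 + u z + v z)
    ((hu.const_add 1).add hv) hw0
  have hrel : ∀ z, 1 + Complex.exp (p z) + Complex.exp (q z) = Complex.exp (s z) := by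
    intro z
    rw [← hup, ← hvq, ← hws]
  have hW := wronsk_zero_all hp hq hs hrel
  have d1 : ∀ {p u : ℂ → ℂ}, Differentiable ℂ p → (∀ z, u z = Complex.exp (p z)) →
      ∀ z, deriv u z = Complex.exp (p z) * deriv p z := by
    intro p u hp hup z
    have : u = fun z => Complex.exp (p z) := funext hup
    rw [this]
    exact (hp z).hasDerivAt.cexp.deriv
  have d2 : ∀ {p u : ℂ → ℂ}, Differentiable ℂ p → (∀ z, u z = Complex.exp (p z)) →
      ∀ z, deriv (deriv u) z = Complex.exp (p z) * (deriv (deriv p) z + deriv p z ^ 2) := by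
    intro p u hp hup z
    have : deriv u = fun z => Complex.exp (p z) * deriv p z := funext (d1 hp hup)
    rw [this]
    refine HasDerivAt.deriv (((hp z).hasDerivAt.cexp.mul ((hp.deriv) z).hasDerivAt).congr_deriv ?_)
    ring
  by_cases hcase : ∀ z, deriv u z = 0
  · refine ⟨-u 0, 1, 0, by simp, fun z => ?_⟩
    rw [is_const_of_deriv_eq_zero hu hcase z 0]
    ring
  · push Not at hcase
    obtain ⟨z1, hz1⟩ := hcase
    have hdep := dependent_of_wronsk hu.deriv hv.deriv (fun z => by
      have := hW z
      unfold wronsk at this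
      rw [d1 hp hup, d2 hp hup, d1 hq hvq, d2 hq hvq]
      linear_combination this) hz1
    set m := deriv v z1 / deriv u z1
    have hconst : ∀ z, v z - m * u z = v 0 - m * u 0 := by
      intro z
      refine is_const_of_deriv_eq_zero (f := fun z => v z - m * u z) (hv.sub (hu.const_mul m))
        (fun w => ?_) z 0
      refine HasDerivAt.deriv
        (((hv w).hasDerivAt.sub ((hu w).hasDerivAt.const_mul m)).congr_deriv ?_)
      rw [hdep w]
      ring
    refine ⟨-(v 0 - m * u 0), -m, 1, by simp, fun z => ?_⟩
    linear_combination hconst z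

/-- Little Picard theorem. -/
theorem little_picard {u : ℂ → ℂ} (hu : Differentiable ℂ u) (hu0 : ∀ z, u z ≠ 0) {c : ℂ}
    (hc : c ≠ 0) (huc : ∀ z, u z ≠ c) : ∀ z w, u z = u w := by
  set t : ℂ → ℂ := fun z => -u z / c with ht
  have htd : Differentiable ℂ t := (hu.neg).div_const c
  have ht0 : ∀ z, t z ≠ 0 := fun z => div_ne_zero (neg_ne_zero.2 (hu0 z)) hc
  have ht1 : ∀ z, 1 + t z ≠ 0 := by
    intro z h
    apply huc z
    simp only [ht] at h
    field_simp at h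
    linear_combination -h
  obtain ⟨a, b, d, hne, hrel⟩ := borel_four (u := fun z => 2 * t z) (v := fun z => t z ^ 2)
    (htd.const_mul 2) (htd.pow 2) (fun z => mul_ne_zero two_ne_zero (ht0 z))
    (fun z => pow_ne_zero 2 (ht0 z))
    (fun z => by
      have := pow_ne_zero 2 (ht1 z)
      intro h
      apply this
      linear_combination h)
  let P : Polynomial ℂ := Polynomial.C d * Polynomial.X ^ 2 + Polynomial.C (2 * b) * Polynomial.X
    + Polynomial.C a
  have hP : P ≠ 0 := by
    intro h
    have h0 : P.coeff 0 = 0 := by rw [h]; simp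
    have h1 : P.coeff 1 = 0 := by rw [h]; simp
    have h2 : P.coeff 2 = 0 := by rw [h]; simp
    simp [P, Polynomial.coeff_X, Polynomial.coeff_C] at h0 h1 h2
    tauto
  have hfin : (Set.range t).Finite := by
    refine (P.roots.toFinset.finite_toSet).subset ?_
    rintro _ ⟨z, rfl⟩
    simp only [Finset.mem_coe, Multiset.mem_toFinset, Polynomial.mem_roots hP, Polynomial.IsRoot.def]
    simp [P]
    linear_combination hrel z
  have hconst := htd.apply_eq_apply_of_bounded hfin.isBounded
  intro z w
  have := hconst z w
  simp only [ht] at this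
  field_simp at this
  exact neg_injective this

/-- affine version -/
lemma picard_affine {u : ℂ → ℂ} (hu : Differentiable ℂ u) (hu0 : ∀ z, u z ≠ 0) {a b : ℂ}
    (ha : a ≠ 0) (hb : b ≠ 0) (h : ∀ z, a + b * u z ≠ 0) : ∀ z w, u z = u w := by
  apply little_picard hu hu0 (c := -a / b) (div_ne_zero (neg_ne_zero.2 ha) hb)
  intro z hz
  apply h z
  rw [hz]
  field_simp
  ring

/-- Normalised Green theorem. -/
theorem green_aux {u v : ℂ → ℂ} (hu : Differentiable ℂ u) (hv : Differentiable ℂ v)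
    (hu0 : ∀ z, u z ≠ 0) (hv0 : ∀ z, v z ≠ 0) (hw0 : ∀ z, 1 + u z + v z ≠ 0) {k α β : ℂ}
    (hk : k ≠ 0) (hα : α ≠ 0) (hβ : β ≠ 0) (hkα : k ≠ α) (hkβ : k ≠ β) (hαβ : α ≠ β)
    (hx0 : ∀ z, k + α * u z + β * v z ≠ 0) : ∀ z w, u z = u w ∧ v z = v w := by
  obtain ⟨a, b, c, hne, hrel⟩ := borel_four hu hv hu0 hv0 hw0
  by_cases ha : a = 0
  · subst ha
    have hc : c ≠ 0 := by
      rintro rfl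
      have := hrel 0
      have hb : b = 0 := by simpa [hu0 0] using this
      simp [hb] at hne
    have hvm : ∀ z, v z = (-b / c) * u z := by
      intro z
      field_simp
      linear_combination hrel z
    set m := -b / c
    have huc : ∀ z w, u z = u w := by
      by_cases hm : 1 + m = 0
      · have hm' : m = -1 := by linear_combination hm
        apply picard_affine hu hu0 hk (b := α - β) (sub_ne_zero.2 hαβ)
        intro z h
        apply hx0 z
        rw [hvm, hm']
        linear_combination h
      · apply picard_affine hu hu0 one_ne_zero hm
        intro z h
        apply hw0 z
        rw [hvm]
        linear_combination h
    intro z w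
    refine ⟨huc z w, ?_⟩
    rw [hvm, hvm, huc z w]
  by_cases hb : b = 0
  · subst hb
    have hc : c ≠ 0 := by
      rintro rfl
      apply ha
      simpa using hrel 0
    have hvm : ∀ z, v z = -a / c := by
      intro z
      field_simp
      linear_combination hrel z
    set m := -a / c
    have huc : ∀ z w, u z = u w := by
      by_cases hm : 1 + m = 0
      · have hm' : m = -1 := by linear_combination hm
        apply picard_affine hu hu0 (a := k - β) (sub_ne_zero.2 hkβ) hα
        intro z h
        apply hx0 z
        rw [hvm, hm']
        linear_combination h
      · apply picard_affine hu hu0 hm one_ne_zero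
        intro z h
        apply hw0 z
        rw [hvm]
        linear_combination h
    intro z w
    exact ⟨huc z w, by rw [hvm, hvm]⟩
  by_cases hc : c = 0
  · subst hc
    have hvm : ∀ z, u z = -a / b := by
      intro z
      field_simp
      linear_combination hrel z
    set m := -a / b
    have huc : ∀ z w, v z = v w := by
      by_cases hm : 1 + m = 0
      · have hm' : m = -1 := by linear_combination hm
        apply picard_affine hv hv0 (a := k - α) (sub_ne_zero.2 hkα) hβ
        intro z h
        apply hx0 z
        rw [hvm, hm']
        linear_combination h
      · apply picard_affine hv hv0 hm one_ne_zero
        intro z h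
        apply hw0 z
        rw [hvm]
        linear_combination h
    intro z w
    exact ⟨by rw [hvm, hvm], huc z w⟩
  have huc := picard_affine hu hu0 ha hb (fun z h => by
    have := hrel z
    rw [h, zero_add] at this
    exact mul_ne_zero hc (hv0 z) this)
  intro z w
  refine ⟨huc z w, ?_⟩
  have h1 := hrel z
  rw [huc z w] at h1
  exact mul_left_cancel₀ hc (by linear_combination h1 - hrel w)

/-- Ratios of linear forms along a holomorphic map are entire. -/
lemma ratio_entire {f : ℂ → Projectivization ℂ (Fin 3 → ℂ)} (hf : HoloToProj f)
    (A B : (Fin 3 → ℂ) →ₗ[ℂ] ℂ) (hB : ∀ z, B (f z).rep ≠ 0) :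
    Differentiable ℂ (fun z => A (f z).rep / B (f z).rep) := by
  intro z₀
  obtain ⟨W, hWo, hz, F, hF, hfF⟩ := hf z₀
  have hlift : ∀ z ∈ W, ∃ a : ℂ, a ≠ 0 ∧ a • (f z).rep = F z := by
    intro z hzW
    obtain ⟨h, e⟩ := hfF z hzW
    have h2 : Projectivization.mk ℂ (F z) h =
        Projectivization.mk ℂ (f z).rep (f z).rep_nonzero := by
      rw [Projectivization.mk_rep, e]
    obtain ⟨a, ha⟩ := (Projectivization.mk_eq_mk_iff ℂ _ _ _ _).1 h2
    exact ⟨a, a.ne_zero, ha⟩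
  have hdA : ∀ A : (Fin 3 → ℂ) →ₗ[ℂ] ℂ, DifferentiableAt ℂ (fun z => A (F z)) z₀ := by
    intro A
    have h1 : DifferentiableAt ℂ F z₀ := hF.differentiableAt (hWo.mem_nhds hz)
    exact (LinearMap.toContinuousLinearMap A).differentiableAt.comp z₀ h1
  have hB0 : B (F z₀) ≠ 0 := by
    obtain ⟨a, ha, e⟩ := hlift z₀ hz
    rw [← e, map_smul]
    exact mul_ne_zero ha (hB z₀)
  refine ((hdA A).div (hdA B) hB0).congr_of_eventuallyEq ?_
  filter_upwards [hWo.mem_nhds hz] with z hzW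
  obtain ⟨a, ha, e⟩ := hlift z hzW
  simp only [Pi.div_apply]
  rw [← e, map_smul, map_smul, smul_eq_mul, smul_eq_mul, mul_div_mul_left _ _ ha]

/-- **Green's theorem.** Let `L 0, …, L 4` be the linear forms cutting out five lines in
general position (no triple point) in `P²(ℂ)`.  Then the complement of the five lines is
hyperbolic: every holomorphic map `f : ℂ → P²(ℂ)` avoiding the five lines is constant. -/
theorem green_theorem
    (L : Fin 5 → ((Fin 3 → ℂ) →ₗ[ℂ] ℂ))
    (hL0 : ∀ i, L i ≠ 0)
    (hL_distinct : ∀ i j, i ≠ j → LinearMap.ker (L i) ≠ LinearMap.ker (L j))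
    (hgen : ∀ i j k : Fin 5, i ≠ j → i ≠ k → j ≠ k →
      ∀ v : Fin 3 → ℂ, v ≠ 0 → ¬ (L i v = 0 ∧ L j v = 0 ∧ L k v = 0))
    (f : ℂ → Projectivization ℂ (Fin 3 → ℂ)) (hf : HoloToProj f)
    (havoid : ∀ (z : ℂ) (i : Fin 5), L i (f z).rep ≠ 0) :
    ∀ z w : ℂ, f z = f w := by
  -- a basis dual to `L 0, L 1, L 2`
  let Φ : (Fin 3 → ℂ) →ₗ[ℂ] (Fin 3 → ℂ) := LinearMap.pi ![L 0, L 1, L 2]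
  have hΦ : ∀ x, Φ x = ![L 0 x, L 1 x, L 2 x] := by
    intro x
    funext i
    fin_cases i <;> rfl
  have hΦi : Function.Injective Φ := by
    rw [← LinearMap.ker_eq_bot, LinearMap.ker_eq_bot']
    intro x hx
    by_contra hx0
    rw [hΦ] at hx
    exact hgen 0 1 2 (by decide) (by decide) (by decide) x hx0
      ⟨congrFun hx 0, congrFun hx 1, congrFun hx 2⟩
  have hΦs : Function.Surjective Φ := LinearMap.injective_iff_surjective.1 hΦi
  have mk : ∀ a b c : ℂ, ∃ x, L 0 x = a ∧ L 1 x = b ∧ L 2 x = c := by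
    intro a b c
    obtain ⟨x, hx⟩ := hΦs ![a, b, c]
    rw [hΦ] at hx
    exact ⟨x, congrFun hx 0, congrFun hx 1, congrFun hx 2⟩
  have ext3 : ∀ x y, L 0 x = L 0 y → L 1 x = L 1 y → L 2 x = L 2 y → x = y := by
    intro x y h0 h1 h2
    apply hΦi
    rw [hΦ, hΦ, h0, h1, h2]
  obtain ⟨e0, h00, h10, h20⟩ := mk 1 0 0
  obtain ⟨e1, h01, h11, h21⟩ := mk 0 1 0
  obtain ⟨e2, h02, h12, h22⟩ := mk 0 0 1
  have expand : ∀ k x, L k x = L k e0 * L 0 x + L k e1 * L 1 x + L k e2 * L 2 x := by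
    intro k x
    have : x = L 0 x • e0 + L 1 x • e1 + L 2 x • e2 := by
      apply ext3 <;> simp [h00, h10, h20, h01, h11, h21, h02, h12, h22]
    conv_lhs => rw [this]
    simp only [map_add, map_smul, smul_eq_mul]
    ring
  have e0n : e0 ≠ 0 := by rintro rfl; simp at h00
  have e1n : e1 ≠ 0 := by rintro rfl; simp at h11
  have e2n : e2 ≠ 0 := by rintro rfl; simp at h22
  have a3 : L 3 e0 ≠ 0 := fun h =>
    hgen 1 2 3 (by decide) (by decide) (by decide) e0 e0n ⟨h10, h20, h⟩
  have b3 : L 3 e1 ≠ 0 := fun h =>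
    hgen 0 2 3 (by decide) (by decide) (by decide) e1 e1n ⟨h01, h21, h⟩
  have c3 : L 3 e2 ≠ 0 := fun h =>
    hgen 0 1 3 (by decide) (by decide) (by decide) e2 e2n ⟨h02, h12, h⟩
  have a4 : L 4 e0 ≠ 0 := fun h =>
    hgen 1 2 4 (by decide) (by decide) (by decide) e0 e0n ⟨h10, h20, h⟩
  have b4 : L 4 e1 ≠ 0 := fun h =>
    hgen 0 2 4 (by decide) (by decide) (by decide) e1 e1n ⟨h01, h21, h⟩
  have c4 : L 4 e2 ≠ 0 := fun h =>
    hgen 0 1 4 (by decide) (by decide) (by decide) e2 e2n ⟨h02, h12, h⟩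
  have mab : L 4 e0 * L 3 e1 ≠ L 4 e1 * L 3 e0 := by
    intro h
    obtain ⟨x, x0, x1, x2⟩ := mk (L 3 e1) (-L 3 e0) 0
    refine hgen 2 3 4 (by decide) (by decide) (by decide) x ?_ ⟨x2, ?_, ?_⟩
    · rintro rfl
      exact b3 (by simpa using x0.symm)
    · rw [expand 3, x0, x1, x2]; ring
    · rw [expand 4, x0, x1, x2]; linear_combination h
  have mac : L 4 e0 * L 3 e2 ≠ L 4 e2 * L 3 e0 := by
    intro h
    obtain ⟨x, x0, x1, x2⟩ := mk (L 3 e2) 0 (-L 3 e0)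
    refine hgen 1 3 4 (by decide) (by decide) (by decide) x ?_ ⟨x1, ?_, ?_⟩
    · rintro rfl
      exact c3 (by simpa using x0.symm)
    · rw [expand 3, x0, x1, x2]; ring
    · rw [expand 4, x0, x1, x2]; linear_combination h
  have mbc : L 4 e1 * L 3 e2 ≠ L 4 e2 * L 3 e1 := by
    intro h
    obtain ⟨x, x0, x1, x2⟩ := mk 0 (L 3 e2) (-L 3 e1)
    refine hgen 0 3 4 (by decide) (by decide) (by decide) x ?_ ⟨x0, ?_, ?_⟩
    · rintro rfl
      exact c3 (by simpa using x1.symm)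
    · rw [expand 3, x0, x1, x2]; ring
    · rw [expand 4, x0, x1, x2]; linear_combination h
  set a := L 3 e0
  set b := L 3 e1
  set c := L 3 e2
  set a' := L 4 e0
  set b' := L 4 e1
  set c' := L 4 e2
  have h0 : ∀ z, L 0 (f z).rep ≠ 0 := fun z => havoid z 0
  have hd1 := ratio_entire hf (L 1) (L 0) h0
  have hd2 := ratio_entire hf (L 2) (L 0) h0
  have key := green_aux (u := fun z => b / a * (L 1 (f z).rep / L 0 (f z).rep))
    (v := fun z => c / a * (L 2 (f z).rep / L 0 (f z).rep)) (hd1.const_mul _) (hd2.const_mul _)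
    (fun z => mul_ne_zero (div_ne_zero b3 a3) (div_ne_zero (havoid z 1) (h0 z)))
    (fun z => mul_ne_zero (div_ne_zero c3 a3) (div_ne_zero (havoid z 2) (h0 z)))
    (fun z h => by
      apply havoid z 3
      have := h0 z
      rw [expand 3]
      field_simp at h
      linear_combination h)
    (k := a') (α := b' * a / b) (β := c' * a / c) a4
    (div_ne_zero (mul_ne_zero b4 a3) b3) (div_ne_zero (mul_ne_zero c4 a3) c3)
    (fun h => mab (by rw [h]; field_simp))
    (fun h => mac (by rw [h]; field_simp))
    (fun h => mbc (by
      field_simp at h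
      linear_combination h))
    (fun z h => by
      apply havoid z 4
      have := h0 z
      rw [expand 4]
      field_simp at h
      linear_combination h)
  intro z w
  obtain ⟨k1, k2⟩ := key z w
  have k1' := mul_left_cancel₀ (div_ne_zero b3 a3) k1
  have k2' := mul_left_cancel₀ (div_ne_zero c3 a3) k2
  have hz := h0 z
  have hw := h0 w
  rw [← Projectivization.mk_rep (f z), ← Projectivization.mk_rep (f w),
    Projectivization.mk_eq_mk_iff']
  refine ⟨L 0 (f z).rep / L 0 (f w).rep, ?_⟩
  apply ext3
  · rw [map_smul, smul_eq_mul, div_mul_cancel₀ _ hw]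
  · rw [map_smul, smul_eq_mul]
    field_simp at k1' ⊢
    linear_combination -k1'
  · rw [map_smul, smul_eq_mul]
    field_simp at k2' ⊢
    linear_combination -k2'
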